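/- Let {X_n, n≥1} be a sequence of random variables on a probability space satisfying the φ-mixing condition (1) with rate r>2 and constant C>0, and the moment condition (2) with exponent α ∈ (0,1) and ν_α = sup_{n≥1} E|X_n|^{1+α}. For b>0 let Z_k(b) = X_k·1(|X_k|>b) − E(X_k·1(|X_k|>b)) denote the centered tail parts. Then there is a positive constant c_α, not depending on n or b, such that for all n≥1 and all b>0, E|Σ_{k=1}^n Z_k(b)|^{1+α} ≤ 2^{1+α} c_α ν_α n. -/

import Mathlib

open MeasureTheory ProbabilityTheory Finset

noncomputable def phiCoef {Ω : Type*} [MeasurableSpace Ω] (μ : Measure Ω)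
    (X : ℕ → Ω → ℝ) (m : ℕ) : ℝ :=
  sSup {x : ℝ | ∃ k : ℕ, 1 ≤ k ∧ ∃ A B : Set Ω,
    MeasurableSet[⨆ i ∈ Set.Icc 1 k, MeasurableSpace.comap (X i) inferInstance] A ∧
    MeasurableSet[⨆ i ∈ Set.Ici (k + m), MeasurableSpace.comap (X i) inferInstance] B ∧
    0 < μ A ∧
    x = |(μ (B ∩ A)).toReal / (μ A).toReal - (μ B).toReal|}

noncomputable def phiSum {Ω : Type*} [MeasurableSpace Ω] (μ : Measure Ω)
    (X : ℕ → Ω → ℝ) : ℝ :=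
  ∑' m : ℕ, Real.sqrt (phiCoef μ X (m + 1))

noncomputable def tailPart {Ω : Type*} [MeasurableSpace Ω] (μ : Measure Ω)
    (X : ℕ → Ω → ℝ) (b : ℝ) (k : ℕ) (ω : Ω) : ℝ :=
  (if b < |X k ω| then X k ω else 0) - ∫ ω', (if b < |X k ω'| then X k ω' else 0) ∂μ

noncomputable def mainPart {Ω : Type*} [MeasurableSpace Ω] (μ : Measure Ω)
    (X : ℕ → Ω → ℝ) (b : ℝ) (k : ℕ) (ω : Ω) : ℝ :=
  (if |X k ω| ≤ b then X k ω else 0) - ∫ ω', (if |X k ω'| ≤ b then X k ω' else 0) ∂μ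

/-!
For simple random variables `U` and `V`, Schur's test for the kernel
`P(U = a, V = b) - P(U = a) P(V = b)` gives Ibragimov's covariance inequality
`|cov(U, V)| ≤ 2 √φ ‖U - E U‖₂ ‖V - E V‖₂`. A second use of the test, on the covariances of a
sequence with `∑ √φ(m) < ∞`, bounds the variance of a sum by a constant times the sum of the
variances. To control `P(|∑ (Y k - E Y k)| > t)` with only `p < 2` moments, truncate every `Y k` at
the level `t` itself: Chebyshev handles the truncated parts and Markov the remainders, and together
they give a constant times `∑ E min(|Y k| / t, (Y k / t)²)`. Integrating this against
`p t ^ (p - 1) dt` produces `∑ E |Y k| ^ p`, since `1 < p < 2`.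
-/

open Filter Topology

section FiniteSums

variable {ι κ : Type*}

-- Schur's test.
lemma sq_sum_sum_mul_mul_le (s : Finset ι) (t : Finset κ) (u : ι → ℝ) (v : κ → ℝ)
    (K : ι → κ → ℝ) {p : ι → ℝ} {q : κ → ℝ} (hrow : ∀ i ∈ s, ∑ j ∈ t, |K i j| ≤ p i)
    (hcol : ∀ j ∈ t, ∑ i ∈ s, |K i j| ≤ q j) :
    (∑ i ∈ s, ∑ j ∈ t, u i * v j * K i j) ^ 2 ≤
      (∑ i ∈ s, u i ^ 2 * p i) * ∑ j ∈ t, v j ^ 2 * q j := by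
  have cauchy_schwarz : (∑ i ∈ s, ∑ j ∈ t, u i * v j * K i j) ^ 2 ≤
      (∑ i ∈ s, ∑ j ∈ t, u i ^ 2 * |K i j|) * ∑ i ∈ s, ∑ j ∈ t, v j ^ 2 * |K i j| := by
    simp only [← sum_product']
    refine sum_sq_le_sum_mul_sum_of_sq_le_mul _ (fun _ _ ↦ by positivity)
      (fun _ _ ↦ by positivity) fun x _ ↦ le_of_eq ?_
    rw [mul_pow, mul_pow, ← sq_abs (K x.1 x.2)]
    ring
  refine cauchy_schwarz.trans ?_
  rw [sum_comm (s := s) (t := t) (f := fun i j ↦ v j ^ 2 * |K i j|)]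
  simp only [← mul_sum]
  gcongr with i hi j hj
  · exact sum_nonneg fun i hi ↦ mul_nonneg (sq_nonneg _)
      ((sum_nonneg fun _ _ ↦ abs_nonneg _).trans (hrow i hi))
  · exact hrow i hi
  · exact hcol j hj

lemma sum_abs_le_two_mul_of_abs_sum_le {s : Finset ι} {x : ι → ℝ} {B : ℝ}
    (h : ∀ t ⊆ s, |∑ i ∈ t, x i| ≤ B) : ∑ i ∈ s, |x i| ≤ 2 * B := by
  have hpos : ∑ i ∈ s with 0 ≤ x i, |x i| = ∑ i ∈ s with 0 ≤ x i, x i :=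
    sum_congr rfl fun i hi ↦ abs_of_nonneg (mem_filter.1 hi).2
  have hneg : ∑ i ∈ s with ¬0 ≤ x i, |x i| = -∑ i ∈ s with ¬0 ≤ x i, x i := by
    rw [← sum_neg_distrib]
    exact sum_congr rfl fun i hi ↦ abs_of_neg (not_le.1 (mem_filter.1 hi).2)
  rw [← sum_filter_add_sum_filter_not s (0 ≤ x ·), hpos, hneg]
  have := (abs_le.1 (h _ (filter_subset (0 ≤ x ·) s))).2
  have := (abs_le.1 (h _ (filter_subset (¬0 ≤ x ·) s))).1
  linarith

lemma sum_comp_le_tsum {w : ℕ → ℝ} (hw : ∀ m, 0 ≤ w m) (hsum : Summable w)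
    {s : Finset ι} {d : ι → ℕ} (hd : Set.InjOn d s) : ∑ i ∈ s, w (d i) ≤ ∑' m, w m := by
  rw [← sum_image (f := w) hd]
  exact hsum.sum_le_tsum _ fun m _ ↦ hw m

lemma sum_comp_natDist_le {w : ℕ → ℝ} (hw : ∀ m, 0 ≤ w m) (hsum : Summable fun m ↦ w (m + 1))
    (s : Finset ℕ) (i : ℕ) :
    ∑ j ∈ s, w (Nat.dist i j) ≤ w 0 + 2 * ∑' m, w (m + 1) := by
  have hle : ∑ j ∈ s with j ≤ i, w (i - j) ≤ w 0 + ∑' m, w (m + 1) := by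
    rw [← ((summable_nat_add_iff 1).1 hsum).tsum_eq_zero_add]
    refine sum_comp_le_tsum hw ((summable_nat_add_iff 1).1 hsum) fun a ha b hb hab ↦ ?_
    simp only [coe_filter, Set.mem_ofPred_eq] at ha hb
    omega
  have hgt : ∑ j ∈ s with ¬j ≤ i, w (j - i - 1 + 1) ≤ ∑' m, w (m + 1) := by
    refine sum_comp_le_tsum (w := fun m ↦ w (m + 1)) (fun m ↦ hw (m + 1)) hsum
      fun a ha b hb hab ↦ ?_
    simp only [coe_filter, Set.mem_ofPred_eq] at ha hb
    omega
  calc ∑ j ∈ s, w (Nat.dist i j)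
      = ∑ j ∈ s with j ≤ i, w (i - j) + ∑ j ∈ s with ¬j ≤ i, w (j - i - 1 + 1) := by
        rw [← sum_filter_add_sum_filter_not s (· ≤ i)]
        congr 1 <;> refine sum_congr rfl fun j hj ↦ congrArg w ?_ <;>
          simp only [mem_filter] at hj <;> simp only [Nat.dist] <;> omega
    _ ≤ w 0 + 2 * ∑' m, w (m + 1) := by linarith

lemma sum_sum_mul_natDist_le {w : ℕ → ℝ} (hw : ∀ m, 0 ≤ w m)
    (hsum : Summable fun m ↦ w (m + 1)) (s : Finset ℕ) (u : ℕ → ℝ) :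
    ∑ i ∈ s, ∑ j ∈ s, u i * u j * w (Nat.dist i j) ≤
      (w 0 + 2 * ∑' m, w (m + 1)) * ∑ i ∈ s, u i ^ 2 := by
  have hrow (i : ℕ) : ∑ j ∈ s, |w (Nat.dist i j)| ≤ w 0 + 2 * ∑' m, w (m + 1) := by
    simpa only [abs_of_nonneg (hw _)] using sum_comp_natDist_le hw hsum s i
  have schur := sq_sum_sum_mul_mul_le s s u u (fun i j ↦ w (Nat.dist i j)) (fun i _ ↦ hrow i)
    fun j _ ↦ by simpa only [Nat.dist_comm] using hrow j
  rw [← sq, ← sum_mul, mul_comm] at schur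
  have htsum : 0 ≤ ∑' m, w (m + 1) := tsum_nonneg fun m ↦ hw (m + 1)
  have := hw 0
  exact le_of_abs_le (abs_le_of_sq_le_sq schur (by positivity))

end FiniteSums

section PhiDependence

variable {Ω : Type*} [MeasurableSpace Ω] {μ : Measure Ω}

/-- The `φ`-dependence coefficient of `σ(Y)` on `σ(X)` is at most `ε`: conditioning on an event
determined by `X` changes the probability of an event determined by `Y` by at most `ε`. Both sides
are multiplied by the probability of the conditioning event, which may therefore be null. -/
def PhiDependentLE {E F : Type*} [MeasurableSpace E] [MeasurableSpace F] (μ : Measure Ω)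
    (X : Ω → E) (Y : Ω → F) (ε : ℝ) : Prop :=
  ∀ S T, MeasurableSet S → MeasurableSet T →
    |μ.real (X ⁻¹' S ∩ Y ⁻¹' T) - μ.real (X ⁻¹' S) * μ.real (Y ⁻¹' T)| ≤ ε * μ.real (X ⁻¹' S)

lemma PhiDependentLE.comp {E F E' F' : Type*} [MeasurableSpace E] [MeasurableSpace F]
    [MeasurableSpace E'] [MeasurableSpace F'] {X : Ω → E} {Y : Ω → F} {ε : ℝ}
    (h : PhiDependentLE μ X Y ε) {f : E → E'} {g : F → F'} (hf : Measurable f)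
    (hg : Measurable g) : PhiDependentLE μ (fun ω ↦ f (X ω)) (fun ω ↦ g (Y ω)) ε :=
  fun S T hS hT ↦ h (f ⁻¹' S) (g ⁻¹' T) (hf hS) (hg hT)

lemma bddAbove_abs_cond_sub [IsProbabilityMeasure μ] (P : Set Ω → Set Ω → Prop) :
    BddAbove {x : ℝ | ∃ A B, P A B ∧ x = |μ.real (B ∩ A) / μ.real A - μ.real B|} := by
  refine ⟨1, ?_⟩
  rintro x ⟨A, B, -, rfl⟩
  have hcond : μ.real (B ∩ A) / μ.real A ≤ 1 :=
    div_le_one_of_le₀ (measureReal_mono Set.inter_subset_right) measureReal_nonneg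
  have hcond₀ : 0 ≤ μ.real (B ∩ A) / μ.real A := by positivity
  exact abs_sub_le_of_nonneg_of_le hcond₀ hcond measureReal_nonneg measureReal_le_one

lemma phiDependentLE_phiCoef [IsProbabilityMeasure μ] (X : ℕ → Ω → ℝ) {i : ℕ} (hi : 1 ≤ i)
    (m : ℕ) : PhiDependentLE μ (X i) (X (i + m)) (phiCoef μ X m) := by
  intro S T hS hT
  set A := X i ⁻¹' S
  set B := X (i + m) ⁻¹' T
  rcases eq_or_ne (μ.real A) 0 with hA₀ | hA₀
  · have : μ.real (A ∩ B) = 0 := measureReal_mono_null Set.inter_subset_left hA₀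
    simp [hA₀, this]
  have hμA : 0 < μ A := pos_iff_ne_zero.2 fun h ↦ hA₀ (by simp [measureReal_def, h])
  have hcond : |μ.real (B ∩ A) / μ.real A - μ.real B| ≤ phiCoef μ X m := by
    refine le_csSup ?_ ⟨i, hi, A, B, ?_, ?_, hμA, rfl⟩
    · refine (bddAbove_abs_cond_sub (μ := μ) fun _ _ ↦ True).mono ?_
      rintro x ⟨k, -, A, B, -, -, -, hx⟩
      exact ⟨A, B, trivial, hx⟩
    · exact le_iSup₂ (f := fun j (_ : j ∈ Set.Icc 1 i) ↦
        MeasurableSpace.comap (X j) inferInstance) i ⟨hi, le_rfl⟩ _ ⟨S, hS, rfl⟩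
    · exact le_iSup₂ (f := fun j (_ : j ∈ Set.Ici (i + m)) ↦
        MeasurableSpace.comap (X j) inferInstance) (i + m) Set.self_mem_Ici _ ⟨T, hT, rfl⟩
  calc |μ.real (A ∩ B) - μ.real A * μ.real B|
      = |μ.real (B ∩ A) / μ.real A - μ.real B| * μ.real A := by
        rw [← abs_of_nonneg (measureReal_nonneg (μ := μ) (s := A)), ← abs_mul,
          abs_of_nonneg measureReal_nonneg, sub_mul, div_mul_cancel₀ _ hA₀, Set.inter_comm,
          mul_comm (μ.real B)]
    _ ≤ phiCoef μ X m * μ.real A := by gcongr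

lemma integral_comp_simpleFunc_eq_sum {β : Type*} [IsFiniteMeasure μ] (U : SimpleFunc Ω β)
    {R : Finset β} (hR : ∀ ω, U ω ∈ R) (F : β → ℝ) :
    ∫ ω, F (U ω) ∂μ = ∑ a ∈ R, F a * μ.real (U ⁻¹' {a}) := by
  classical
  have hsum (ω : Ω) : F (U ω) = ∑ a ∈ R, (U ⁻¹' {a}).indicator (fun _ ↦ F a) ω := by
    simp [Set.indicator_apply, hR]
  simp_rw [hsum]
  rw [integral_finsetSum _ fun a _ ↦
    (integrable_const _).indicator (U.measurableSet_preimage {a})]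
  refine sum_congr rfl fun a _ ↦ ?_
  rw [integral_indicator_const _ (U.measurableSet_preimage _), smul_eq_mul, mul_comm]

lemma sum_measureReal_preimage_singleton_inter {β : Type*} [IsFiniteMeasure μ]
    (U : SimpleFunc Ω β) (R : Finset β) (D : Set Ω) :
    ∑ a ∈ R, μ.real (U ⁻¹' {a} ∩ D) = μ.real (U ⁻¹' R ∩ D) := by
  simp only [← measureReal_restrict_apply (U.measurableSet_preimage _)]
  exact sum_measureReal_preimage_singleton R fun a _ ↦ U.measurableSet_preimage _

lemma PhiDependentLE.sum_abs_sub_le {E : Type*} [MeasurableSpace E] [IsFiniteMeasure μ]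
    {X : Ω → E} {V : SimpleFunc Ω ℝ} {ε : ℝ} (h : PhiDependentLE μ X V ε) {S : Set E}
    (hS : MeasurableSet S) (R : Finset ℝ) :
    ∑ b ∈ R, |μ.real (X ⁻¹' S ∩ V ⁻¹' {b}) - μ.real (X ⁻¹' S) * μ.real (V ⁻¹' {b})| ≤
      2 * (ε * μ.real (X ⁻¹' S)) := by
  refine sum_abs_le_two_mul_of_abs_sum_le fun T _ ↦ ?_
  have hjoint := sum_measureReal_preimage_singleton_inter (μ := μ) V T (X ⁻¹' S)
  have hmarg := sum_measureReal_preimage_singleton (μ := μ) T fun b _ ↦ V.measurableSet_preimage {b}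
  simp only [Set.inter_comm _ (X ⁻¹' S)] at hjoint
  rw [sum_sub_distrib, ← mul_sum, hjoint, hmarg]
  exact h S T hS T.measurableSet

lemma sum_abs_measureReal_inter_sub_le [IsProbabilityMeasure μ] {β : Type*} (U : SimpleFunc Ω β)
    (R : Finset β) (D : Set Ω) :
    ∑ a ∈ R, |μ.real (U ⁻¹' {a} ∩ D) - μ.real (U ⁻¹' {a}) * μ.real D| ≤ 2 * μ.real D := by
  have hmarg : ∑ a ∈ R, μ.real (U ⁻¹' {a}) ≤ 1 := by
    rw [sum_measureReal_preimage_singleton R fun a _ ↦ U.measurableSet_preimage {a}]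
    exact measureReal_le_one
  have hjoint : ∑ a ∈ R, μ.real (U ⁻¹' {a} ∩ D) ≤ μ.real D := by
    rw [sum_measureReal_preimage_singleton_inter]
    exact measureReal_mono Set.inter_subset_right
  calc ∑ a ∈ R, |μ.real (U ⁻¹' {a} ∩ D) - μ.real (U ⁻¹' {a}) * μ.real D|
      ≤ ∑ a ∈ R, (μ.real (U ⁻¹' {a} ∩ D) + μ.real (U ⁻¹' {a}) * μ.real D) := by
        gcongr with a
        exact (abs_sub _ _).trans_eq (by simp only [abs_mul, abs_of_nonneg measureReal_nonneg])
    _ = ∑ a ∈ R, μ.real (U ⁻¹' {a} ∩ D) + (∑ a ∈ R, μ.real (U ⁻¹' {a})) * μ.real D := by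
        rw [sum_add_distrib, sum_mul]
    _ ≤ μ.real D + 1 * μ.real D := by gcongr
    _ = 2 * μ.real D := by ring

lemma PhiDependentLE.sq_integral_mul_sub_le_of_simpleFunc [IsProbabilityMeasure μ]
    {U V : SimpleFunc Ω ℝ} {ε : ℝ} (h : PhiDependentLE μ U V ε) :
    (∫ ω, U ω * V ω ∂μ - (∫ ω, U ω ∂μ) * ∫ ω, V ω ∂μ) ^ 2 ≤
      4 * ε * ((∫ ω, U ω ^ 2 ∂μ) * ∫ ω, V ω ^ 2 ∂μ) := by
  have hU := integral_comp_simpleFunc_eq_sum (μ := μ) U U.mem_range_self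
  have hV := integral_comp_simpleFunc_eq_sum (μ := μ) V V.mem_range_self
  have hUV : ∫ ω, U ω * V ω ∂μ =
      ∑ a ∈ U.range, ∑ b ∈ V.range, a * b * μ.real (U ⁻¹' {a} ∩ V ⁻¹' {b}) := by
    have := integral_comp_simpleFunc_eq_sum (μ := μ) (U.pair V) (R := U.range ×ˢ V.range)
      (fun ω ↦ mem_product.2 ⟨U.mem_range_self ω, V.mem_range_self ω⟩) fun z ↦ z.1 * z.2
    simpa only [sum_product, ← Set.singleton_prod_singleton, SimpleFunc.pair_preimage,
      SimpleFunc.pair_apply] using this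
  have hcov : ∫ ω, U ω * V ω ∂μ - (∫ ω, U ω ∂μ) * ∫ ω, V ω ∂μ =
      ∑ a ∈ U.range, ∑ b ∈ V.range, a * b *
        (μ.real (U ⁻¹' {a} ∩ V ⁻¹' {b}) - μ.real (U ⁻¹' {a}) * μ.real (V ⁻¹' {b})) := by
    rw [hUV, hU fun a ↦ a, hV fun b ↦ b, sum_mul_sum]
    simp only [← sum_sub_distrib]
    exact sum_congr rfl fun a _ ↦ sum_congr rfl fun b _ ↦ by ring
  rw [hcov]
  refine (sq_sum_sum_mul_mul_le _ _ _ _ _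
    (fun a _ ↦ h.sum_abs_sub_le (measurableSet_singleton a) V.range)
    fun b _ ↦ sum_abs_measureReal_inter_sub_le U U.range (V ⁻¹' {b})).trans_eq ?_
  have hrow : ∑ a ∈ U.range, a ^ 2 * (2 * (ε * μ.real (U ⁻¹' {a}))) =
      2 * ε * ∫ ω, U ω ^ 2 ∂μ := by
    rw [hU fun a ↦ a ^ 2, mul_sum]
    exact sum_congr rfl fun a _ ↦ by ring
  have hcol : ∑ b ∈ V.range, b ^ 2 * (2 * μ.real (V ⁻¹' {b})) = 2 * ∫ ω, V ω ^ 2 ∂μ := by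
    rw [hV fun b ↦ b ^ 2, mul_sum]
    exact sum_congr rfl fun b _ ↦ by ring
  rw [hrow, hcol]
  ring

lemma exists_simpleFunc_tendsto_id : ∃ A : ℕ → SimpleFunc ℝ ℝ,
    (∀ x, Tendsto (A · x) atTop (𝓝 x)) ∧ ∀ n x, |A n x| ≤ 2 * |x| := by
  refine ⟨SimpleFunc.approxOn id measurable_id Set.univ 0 (Set.mem_univ 0),
    fun x ↦ SimpleFunc.tendsto_approxOn measurable_id _ (by simp), fun n x ↦ ?_⟩
  simpa only [two_mul, Real.norm_eq_abs, id] using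
    SimpleFunc.norm_approxOn_zero_le measurable_id (Set.mem_univ 0) x n

lemma PhiDependentLE.sq_integral_mul_sub_le [IsProbabilityMeasure μ] {U V : Ω → ℝ}
    (hU : Measurable U) (hV : Measurable V) (hU2 : MemLp U 2 μ) (hV2 : MemLp V 2 μ) {ε : ℝ}
    (h : PhiDependentLE μ U V ε) :
    (∫ ω, U ω * V ω ∂μ - (∫ ω, U ω ∂μ) * ∫ ω, V ω ∂μ) ^ 2 ≤
      4 * ε * ((∫ ω, U ω ^ 2 ∂μ) * ∫ ω, V ω ^ 2 ∂μ) := by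
  obtain ⟨A, hA, hA_le⟩ := exists_simpleFunc_tendsto_id
  have tendsto_mul {f g : Ω → ℝ} (hf : Measurable f) (hg : Measurable g) (hf2 : MemLp f 2 μ)
      (hg2 : MemLp g 2 μ) : Tendsto (fun n ↦ ∫ ω, A n (f ω) * A n (g ω) ∂μ)
        atTop (𝓝 (∫ ω, f ω * g ω ∂μ)) := by
    refine tendsto_integral_of_dominated_convergence (fun ω ↦ 4 * |f ω * g ω|)
      (fun n ↦ (((A n).measurable.comp hf).mul ((A n).measurable.comp hg)).aestronglyMeasurable)
      ((hf2.integrable_mul hg2).abs.const_mul 4) (fun n ↦ .of_forall fun ω ↦ ?_)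
      (.of_forall fun ω ↦ (hA _).mul (hA _))
    calc ‖A n (f ω) * A n (g ω)‖ = |A n (f ω)| * |A n (g ω)| := norm_mul _ _
      _ ≤ (2 * |f ω|) * (2 * |g ω|) := by gcongr <;> exact hA_le n _
      _ = 4 * |f ω * g ω| := by rw [abs_mul]; ring
  have tendsto_mean {f : Ω → ℝ} (hf : Measurable f) (hf2 : MemLp f 2 μ) :
      Tendsto (fun n ↦ ∫ ω, A n (f ω) ∂μ) atTop (𝓝 (∫ ω, f ω ∂μ)) :=
    tendsto_integral_of_dominated_convergence (fun ω ↦ 2 * |f ω|)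
      (fun n ↦ ((A n).measurable.comp hf).aestronglyMeasurable)
      ((hf2.integrable one_le_two).abs.const_mul 2)
      (fun n ↦ .of_forall fun ω ↦ hA_le n _) (.of_forall fun ω ↦ hA _)
  simp only [sq (U _), sq (V _)]
  refine le_of_tendsto_of_tendsto'
    (((tendsto_mul hU hV hU2 hV2).sub ((tendsto_mean hU hU2).mul (tendsto_mean hV hV2))).pow 2)
    (((tendsto_mul hU hU hU2 hU2).mul (tendsto_mul hV hV hV2 hV2)).const_mul (4 * ε)) fun n ↦ ?_
  simp only [← sq (A n _)]
  exact PhiDependentLE.sq_integral_mul_sub_le_of_simpleFunc (U := (A n).comp U hU)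
    (V := (A n).comp V hV) (h.comp (A n).measurable (A n).measurable)

-- Ibragimov's covariance inequality, with exponents `(2, 2)`.
lemma PhiDependentLE.abs_covariance_le [IsProbabilityMeasure μ] {U V : Ω → ℝ}
    (hU : Measurable U) (hV : Measurable V) (hU2 : MemLp U 2 μ) (hV2 : MemLp V 2 μ) {ε : ℝ}
    (h : PhiDependentLE μ U V ε) :
    |cov[U, V; μ]| ≤ √Var[U; μ] * √Var[V; μ] * (2 * √ε) := by
  have hcov : cov[U, V; μ] ^ 2 ≤ 4 * ε * (Var[U; μ] * Var[V; μ]) := by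
    have hdep := h.comp (measurable_id.sub_const μ[U]) (measurable_id.sub_const μ[V])
    have centered := hdep.sq_integral_mul_sub_le (hU.sub_const _) (hV.sub_const _)
      (hU2.sub (memLp_const _)) (hV2.sub (memLp_const _))
    have hmean : ∫ ω, (U ω - μ[U]) ∂μ = 0 := by
      simp [integral_sub (hU2.integrable one_le_two) (integrable_const _)]
    rwa [hmean, zero_mul, sub_zero, ← covariance, ← variance_eq_integral hU.aemeasurable,
      ← variance_eq_integral hV.aemeasurable] at centered
  calc |cov[U, V; μ]| ≤ √(4 * ε * (Var[U; μ] * Var[V; μ])) := Real.abs_le_sqrt hcov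
    _ = √Var[U; μ] * √Var[V; μ] * (2 * √ε) := by
      have hVar := mul_nonneg (variance_nonneg U μ) (variance_nonneg V μ)
      rw [Real.sqrt_mul' _ hVar, Real.sqrt_mul (variance_nonneg U μ), Real.sqrt_mul zero_le_four,
        show √(4 : ℝ) = 2 by rw [show (4 : ℝ) = 2 ^ 2 by norm_num, Real.sqrt_sq zero_le_two]]
      ring

lemma variance_sum_le_of_phiDependentLE [IsProbabilityMeasure μ] {s : Finset ℕ}
    {Y : ℕ → Ω → ℝ} (hY : ∀ k ∈ s, Measurable (Y k)) (hY2 : ∀ k ∈ s, MemLp (Y k) 2 μ)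
    {ε : ℕ → ℝ} (hε : Summable fun m ↦ √(ε m))
    (hdep : ∀ i ∈ s, ∀ m, i + (m + 1) ∈ s → PhiDependentLE μ (Y i) (Y (i + (m + 1))) (ε m)) :
    Var[∑ k ∈ s, Y k; μ] ≤ (1 + 4 * ∑' m, √(ε m)) * ∑ k ∈ s, Var[Y k; μ] := by
  let w : ℕ → ℝ := fun | 0 => 1 | m + 1 => 2 * √(ε m)
  have hw : ∀ m, 0 ≤ w m
    | 0 => zero_le_one
    | m + 1 => by simp only [w]; positivity
  have hcov_add {i : ℕ} (hi : i ∈ s) : ∀ m, i + m ∈ s →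
      cov[Y i, Y (i + m); μ] ≤ √Var[Y i; μ] * √Var[Y (i + m); μ] * w m
    | 0, _ => by
      simp only [w, add_zero, mul_one]
      rw [covariance_self (hY i hi).aemeasurable, Real.mul_self_sqrt (variance_nonneg _ _)]
    | m + 1, hm => (le_abs_self _).trans <|
      (hdep i hi m hm).abs_covariance_le (hY i hi) (hY _ hm) (hY2 i hi) (hY2 _ hm)
  have hcov {i j : ℕ} (hi : i ∈ s) (hj : j ∈ s) :
      cov[Y i, Y j; μ] ≤ √Var[Y i; μ] * √Var[Y j; μ] * w (Nat.dist i j) := by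
    rcases le_total i j with hij | hij
    · obtain ⟨m, rfl⟩ := Nat.exists_eq_add_of_le hij
      simpa [Nat.dist_eq_sub_of_le hij] using hcov_add hi m hj
    · obtain ⟨m, rfl⟩ := Nat.exists_eq_add_of_le hij
      rw [covariance_comm, Nat.dist_comm, mul_comm √_]
      simpa [Nat.dist_eq_sub_of_le hij] using hcov_add hj m hi
  calc Var[∑ k ∈ s, Y k; μ] = ∑ i ∈ s, ∑ j ∈ s, cov[Y i, Y j; μ] := variance_sum' hY2
    _ ≤ ∑ i ∈ s, ∑ j ∈ s, √Var[Y i; μ] * √Var[Y j; μ] * w (Nat.dist i j) := by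
        gcongr with i hi j hj
        exact hcov hi hj
    _ ≤ (1 + 2 * ∑' m, 2 * √(ε m)) * ∑ k ∈ s, √Var[Y k; μ] ^ 2 :=
        sum_sum_mul_natDist_le hw (hε.mul_left 2) s _
    _ = (1 + 4 * ∑' m, √(ε m)) * ∑ k ∈ s, Var[Y k; μ] := by
        simp only [Real.sq_sqrt (variance_nonneg _ _), tsum_mul_left]
        ring

end PhiDependence

section MinAbsSq

/-- The function `x ↦ min (|x|, x²)`. At `x = y / t` it bounds both contributions of a value `y` to
the tail at level `t`: the second moment of its part below `t` and the first moment of its part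
above `t`, normalised by `t²` and `t`. -/
noncomputable def minAbsSq (x : ℝ) : ℝ := min |x| (x ^ 2)

lemma minAbsSq_nonneg (x : ℝ) : 0 ≤ minAbsSq x := le_min (abs_nonneg x) (sq_nonneg x)

lemma minAbsSq_of_one_le_abs {x : ℝ} (hx : 1 ≤ |x|) : minAbsSq x = |x| := by
  rw [minAbsSq, min_eq_left]
  rw [← sq_abs, sq]
  exact le_mul_of_one_le_left (abs_nonneg x) hx

@[fun_prop]
lemma measurable_minAbsSq : Measurable minAbsSq :=
  (continuous_abs.min (continuous_pow 2)).measurable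

lemma integrable_minAbsSq_div {Ω : Type*} [MeasurableSpace Ω] {μ : Measure Ω} {Y : Ω → ℝ}
    (hY : Measurable Y) (hint : Integrable Y μ) (t : ℝ) :
    Integrable (fun ω ↦ minAbsSq (Y ω / t)) μ := by
  have hmeas : Measurable fun ω ↦ minAbsSq (Y ω / t) := by fun_prop
  refine (hint.div_const t).mono hmeas.aestronglyMeasurable (.of_forall fun ω ↦ ?_)
  rw [Real.norm_of_nonneg (minAbsSq_nonneg _)]
  exact min_le_left _ _

lemma sq_truncation_le_minAbsSq {Ω : Type*} (Y : Ω → ℝ) {t : ℝ} (ht : 0 < t) (ω : Ω) :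
    truncation Y t ω ^ 2 ≤ t ^ 2 * minAbsSq (Y ω / t) := by
  have hle : |truncation Y t ω| ≤ t := (abs_truncation_le_bound Y t ω).trans_eq (abs_of_pos ht)
  have hself := abs_truncation_le_abs_self Y t ω
  rw [minAbsSq, mul_min_of_nonneg _ _ (sq_nonneg t), le_min_iff, abs_div, abs_of_pos ht, div_pow,
    mul_div_cancel₀ _ (by positivity), ← sq_abs]
  refine ⟨?_, sq_le_sq.2 (by rwa [abs_abs])⟩
  calc |truncation Y t ω| ^ 2 = |truncation Y t ω| * |truncation Y t ω| := sq _
    _ ≤ t * |Y ω| := by gcongr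
    _ = t ^ 2 * (|Y ω| / t) := by field_simp

lemma abs_sub_truncation_le_minAbsSq {Ω : Type*} (Y : Ω → ℝ) {t : ℝ} (ht : 0 < t) (ω : Ω) :
    |Y ω - truncation Y t ω| ≤ t * minAbsSq (Y ω / t) := by
  rcases lt_or_ge |Y ω| t with hlt | hge
  · rw [truncation_eq_self hlt, sub_self, abs_zero]
    exact mul_nonneg ht.le (minAbsSq_nonneg _)
  · have hone : 1 ≤ |Y ω / t| := by rwa [abs_div, abs_of_pos ht, one_le_div ht]
    rw [minAbsSq_of_one_le_abs hone, abs_div, abs_of_pos ht, mul_div_cancel₀ _ ht.ne']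
    simp only [truncation, Function.comp_apply, Set.indicator, id]
    split_ifs <;> simp

end MinAbsSq

section TailBound

variable {Ω ι : Type*} [MeasurableSpace Ω] {μ : Measure Ω} {t : ℝ}

lemma integral_abs_sub_integral_le [IsProbabilityMeasure μ] {R : Ω → ℝ} (hR : Integrable R μ) :
    ∫ ω, |R ω - μ[R]| ∂μ ≤ 2 * ∫ ω, |R ω| ∂μ := by
  calc ∫ ω, |R ω - μ[R]| ∂μ ≤ ∫ ω, (|R ω| + |μ[R]|) ∂μ :=
        integral_mono (hR.sub (integrable_const _)).abs (hR.abs.add (integrable_const _))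
          fun ω ↦ abs_sub _ _
    _ = ∫ ω, |R ω| ∂μ + |μ[R]| := by
        rw [integral_add hR.abs (integrable_const _), integral_const, probReal_univ, one_smul]
    _ ≤ 2 * ∫ ω, |R ω| ∂μ := by
        rw [two_mul]
        gcongr
        exact abs_integral_le_integral_abs

lemma variance_truncation_le_integral_minAbsSq [IsProbabilityMeasure μ] {Y : Ω → ℝ}
    (hY : Measurable Y) (hint : Integrable Y μ) (ht : 0 < t) :
    Var[truncation Y t; μ] ≤ t ^ 2 * ∫ ω, minAbsSq (Y ω / t) ∂μ := by
  refine (variance_le_expectation_sq hY.aestronglyMeasurable.truncation).trans ?_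
  rw [← integral_const_mul]
  exact integral_mono hY.aestronglyMeasurable.memLp_truncation.integrable_sq
    ((integrable_minAbsSq_div hY hint t).const_mul _) (sq_truncation_le_minAbsSq Y ht)

lemma measureReal_half_le_abs_sum_truncation_sub_le [IsProbabilityMeasure μ] {s : Finset ℕ}
    {Y : ℕ → Ω → ℝ} (hY : ∀ k ∈ s, Measurable (Y k)) (hint : ∀ k ∈ s, Integrable (Y k) μ)
    {ε : ℕ → ℝ} (hε : Summable fun m ↦ √(ε m))
    (hdep : ∀ i ∈ s, ∀ m, i + (m + 1) ∈ s → PhiDependentLE μ (Y i) (Y (i + (m + 1))) (ε m))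
    (ht : 0 < t) :
    μ.real {ω | t / 2 ≤ |(∑ k ∈ s, truncation (Y k) t) ω - μ[∑ k ∈ s, truncation (Y k) t]|} ≤
      4 * (1 + 4 * ∑' m, √(ε m)) * ∑ k ∈ s, ∫ ω, minAbsSq (Y k ω / t) ∂μ := by
  have hmeas : Measurable (Set.indicator (Set.Ioc (-t) t) id : ℝ → ℝ) :=
    measurable_id.indicator measurableSet_Ioc
  have hL2 (k : ℕ) (hk : k ∈ s) : MemLp (truncation (Y k) t) 2 μ :=
    (hY k hk).aestronglyMeasurable.memLp_truncation
  have hvar : Var[∑ k ∈ s, truncation (Y k) t; μ] ≤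
      (1 + 4 * ∑' m, √(ε m)) * ∑ k ∈ s, t ^ 2 * ∫ ω, minAbsSq (Y k ω / t) ∂μ := by
    refine (variance_sum_le_of_phiDependentLE (fun k hk ↦ hmeas.comp (hY k hk)) hL2 hε
      fun i hi m hm ↦ (hdep i hi m hm).comp hmeas hmeas).trans ?_
    gcongr with k hk
    exact variance_truncation_le_integral_minAbsSq (hY k hk) (hint k hk) ht
  calc μ.real {ω | t / 2 ≤ |(∑ k ∈ s, truncation (Y k) t) ω - μ[∑ k ∈ s, truncation (Y k) t]|}
      ≤ Var[∑ k ∈ s, truncation (Y k) t; μ] / (t / 2) ^ 2 :=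
        ENNReal.toReal_le_of_le_ofReal (div_nonneg (variance_nonneg _ _) (sq_nonneg _))
          (meas_ge_le_variance_div_sq (memLp_finsetSum' s hL2) (half_pos ht))
    _ ≤ (1 + 4 * ∑' m, √(ε m)) * (∑ k ∈ s, t ^ 2 * ∫ ω, minAbsSq (Y k ω / t) ∂μ) /
          (t / 2) ^ 2 := by gcongr
    _ = 4 * (1 + 4 * ∑' m, √(ε m)) * ∑ k ∈ s, ∫ ω, minAbsSq (Y k ω / t) ∂μ := by
        rw [← mul_sum]
        field

lemma measureReal_half_le_abs_sum_sub_truncation_sub_le [IsProbabilityMeasure μ] {s : Finset ι}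
    {Y : ι → Ω → ℝ} (hY : ∀ k ∈ s, Measurable (Y k)) (hint : ∀ k ∈ s, Integrable (Y k) μ)
    (ht : 0 < t) :
    μ.real {ω | t / 2 ≤ |(∑ k ∈ s, (Y k - truncation (Y k) t)) ω -
        μ[∑ k ∈ s, (Y k - truncation (Y k) t)]|} ≤
      4 * ∑ k ∈ s, ∫ ω, minAbsSq (Y k ω / t) ∂μ := by
  set R := ∑ k ∈ s, (Y k - truncation (Y k) t)
  have hR : Integrable R μ := integrable_finsetSum' s fun k hk ↦
    (hint k hk).sub (hY k hk).aestronglyMeasurable.integrable_truncation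
  have hintegrable (k : ι) (hk : k ∈ s) : Integrable (fun ω ↦ t * minAbsSq (Y k ω / t)) μ :=
    (integrable_minAbsSq_div (hY k hk) (hint k hk) t).const_mul t
  have hR_le (ω : Ω) : |R ω| ≤ ∑ k ∈ s, t * minAbsSq (Y k ω / t) := by
    simp only [R, Finset.sum_apply, Pi.sub_apply]
    exact (abs_sum_le_sum_abs _ _).trans
      (sum_le_sum fun k _ ↦ abs_sub_truncation_le_minAbsSq (Y k) ht ω)
  have hE : ∫ ω, |R ω| ∂μ ≤ t * ∑ k ∈ s, ∫ ω, minAbsSq (Y k ω / t) ∂μ := by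
    refine (integral_mono hR.abs (integrable_finsetSum s hintegrable) hR_le).trans_eq ?_
    rw [integral_finsetSum s hintegrable, mul_sum]
    simp only [integral_const_mul]
  have markov := mul_meas_ge_le_integral_of_nonneg (.of_forall fun ω ↦ abs_nonneg (R ω - μ[R]))
    (hR.sub (integrable_const _)).abs (t / 2)
  have hcentered := integral_abs_sub_integral_le hR
  refine le_of_mul_le_mul_left ?_ (half_pos ht)
  linarith

lemma measureReal_lt_abs_add_le [IsFiniteMeasure μ] (f g : Ω → ℝ) (t : ℝ) :
    μ.real {ω | t < |f ω + g ω|} ≤ μ.real {ω | t / 2 ≤ |f ω|} + μ.real {ω | t / 2 ≤ |g ω|} := by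
  refine (measureReal_mono fun ω (hω : t < _) ↦ ?_).trans (measureReal_union_le _ _)
  have := abs_add_le (f ω) (g ω)
  by_contra! h
  simp only [Set.mem_union, Set.mem_ofPred_eq, not_or, not_le] at h
  linarith

lemma measureReal_lt_abs_sum_sub_le [IsProbabilityMeasure μ] {s : Finset ℕ}
    {Y : ℕ → Ω → ℝ} (hY : ∀ k ∈ s, Measurable (Y k)) (hint : ∀ k ∈ s, Integrable (Y k) μ)
    {ε : ℕ → ℝ} (hε : Summable fun m ↦ √(ε m))
    (hdep : ∀ i ∈ s, ∀ m, i + (m + 1) ∈ s → PhiDependentLE μ (Y i) (Y (i + (m + 1))) (ε m))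
    (ht : 0 < t) :
    μ.real {ω | t < |∑ k ∈ s, (Y k ω - μ[Y k])|} ≤
      8 * (1 + 2 * ∑' m, √(ε m)) * ∑ k ∈ s, ∫ ω, minAbsSq (Y k ω / t) ∂μ := by
  set T := ∑ k ∈ s, truncation (Y k) t
  set R := ∑ k ∈ s, (Y k - truncation (Y k) t)
  have htrunc (k : ℕ) (hk : k ∈ s) : Integrable (truncation (Y k) t) μ :=
    (hY k hk).aestronglyMeasurable.integrable_truncation
  have hmean : μ[T] + μ[R] = ∑ k ∈ s, μ[Y k] := by
    rw [← integral_add' (integrable_finsetSum' s htrunc)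
      (integrable_finsetSum' s fun k hk ↦ (hint k hk).sub (htrunc k hk)), ← sum_add_distrib,
      ← integral_finsetSum s hint]
    simp
  have hsplit (ω : Ω) : ∑ k ∈ s, (Y k ω - μ[Y k]) = (T ω - μ[T]) + (R ω - μ[R]) := by
    rw [sum_sub_distrib, ← hmean]
    simp only [T, R, Finset.sum_apply, Pi.sub_apply, sum_sub_distrib]
    ring
  simp only [hsplit]
  refine (measureReal_lt_abs_add_le _ _ t).trans ?_
  have := measureReal_half_le_abs_sum_truncation_sub_le hY hint hε hdep ht
  have := measureReal_half_le_abs_sum_sub_truncation_sub_le hY hint ht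
  linarith

end TailBound

section LayerCake

variable {p : ℝ}

lemma setLIntegral_Ioc_ofReal_mul_rpow {a : ℝ} (hp : 1 < p) (ha : 0 < a) :
    ∫⁻ t in Set.Ioc 0 a, ENNReal.ofReal (a * t ^ (p - 2)) =
      ENNReal.ofReal (a ^ p / (p - 1)) := by
  have hint : IntervalIntegrable (fun t : ℝ ↦ a * t ^ (p - 2)) volume 0 a :=
    (intervalIntegral.intervalIntegrable_rpow' (by linarith)).const_mul a
  rw [← ofReal_integral_eq_lintegral_ofReal
    ((intervalIntegrable_iff_integrableOn_Ioc_of_le ha.le).1 hint)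
    ((ae_restrict_mem measurableSet_Ioc).mono fun t ht ↦
      mul_nonneg ha.le (Real.rpow_nonneg ht.1.le _)),
    ← intervalIntegral.integral_of_le ha.le, intervalIntegral.integral_const_mul,
    integral_rpow (.inl (by linarith)), show p - 2 + 1 = p - 1 by ring,
    Real.zero_rpow (by linarith), sub_zero, mul_div_assoc', Real.rpow_sub_one ha.ne',
    mul_div_cancel₀ _ ha.ne']

lemma setLIntegral_Ioi_ofReal_sq_mul_rpow {a : ℝ} (hp : p < 2) (ha : 0 < a) :
    ∫⁻ t in Set.Ioi a, ENNReal.ofReal (a ^ 2 * t ^ (p - 3)) =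
      ENNReal.ofReal (a ^ p / (2 - p)) := by
  rw [← ofReal_integral_eq_lintegral_ofReal
    ((integrableOn_Ioi_rpow_of_lt (by linarith) ha).const_mul (a ^ 2))
    ((ae_restrict_mem measurableSet_Ioi).mono fun t ht ↦
      mul_nonneg (sq_nonneg a) (Real.rpow_nonneg (ha.trans ht).le _)),
    integral_const_mul, integral_Ioi_rpow_of_lt (by linarith) ha,
    show p - 3 + 1 = p - 2 by ring, neg_div, ← div_neg, neg_sub, mul_div_assoc',
    Real.rpow_sub ha, Real.rpow_two, mul_div_cancel₀ _ (by positivity)]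

lemma lintegral_minAbsSq_div_mul_rpow_le (hp1 : 1 < p) (hp2 : p < 2) (y : ℝ) :
    ∫⁻ t in Set.Ioi 0, ENNReal.ofReal (minAbsSq (y / t)) * ENNReal.ofReal (t ^ (p - 1)) ≤
      ENNReal.ofReal (|y| ^ p / ((p - 1) * (2 - p))) := by
  rcases eq_or_ne y 0 with rfl | hy
  · simp [minAbsSq]
  have ha : 0 < |y| := abs_pos.2 hy
  have : 0 < p - 1 := sub_pos.2 hp1
  have : 0 < 2 - p := sub_pos.2 hp2
  have hlinear (t : ℝ) (ht : 0 < t) :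
      minAbsSq (y / t) * t ^ (p - 1) ≤ |y| * t ^ (p - 2) := by
    calc minAbsSq (y / t) * t ^ (p - 1) ≤ |y / t| * t ^ (p - 1) := by
          gcongr
          exact min_le_left _ _
      _ = |y| * t ^ (p - 2) := by
          rw [abs_div, abs_of_pos ht, show p - 2 = p - 1 - 1 by ring,
            Real.rpow_sub_one ht.ne' (p - 1)]
          ring
  have hquadratic (t : ℝ) (ht : 0 < t) :
      minAbsSq (y / t) * t ^ (p - 1) ≤ |y| ^ 2 * t ^ (p - 3) := by
    calc minAbsSq (y / t) * t ^ (p - 1) ≤ (y / t) ^ 2 * t ^ (p - 1) := by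
          gcongr
          exact min_le_right _ _
      _ = |y| ^ 2 * t ^ (p - 3) := by
          rw [sq_abs, div_pow, show p - 3 = p - 1 - 2 by ring, Real.rpow_sub ht (p - 1),
            Real.rpow_two]
          ring
  simp only [← ENNReal.ofReal_mul (minAbsSq_nonneg _)]
  calc ∫⁻ t in Set.Ioi 0, ENNReal.ofReal (minAbsSq (y / t) * t ^ (p - 1))
      ≤ (∫⁻ t in Set.Ioc 0 |y|, ENNReal.ofReal (|y| * t ^ (p - 2))) +
          ∫⁻ t in Set.Ioi |y|, ENNReal.ofReal (|y| ^ 2 * t ^ (p - 3)) := by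
        rw [← Set.Ioc_union_Ioi_eq_Ioi ha.le]
        refine (lintegral_union_le _ _ _).trans (add_le_add ?_ ?_)
        · exact setLIntegral_mono' measurableSet_Ioc fun t ht ↦
            ENNReal.ofReal_le_ofReal (hlinear t ht.1)
        · exact setLIntegral_mono' measurableSet_Ioi fun t ht ↦
            ENNReal.ofReal_le_ofReal (hquadratic t (ha.trans ht))
    _ = ENNReal.ofReal (|y| ^ p / ((p - 1) * (2 - p))) := by
        rw [setLIntegral_Ioc_ofReal_mul_rpow hp1 ha, setLIntegral_Ioi_ofReal_sq_mul_rpow hp2 ha,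
          ← ENNReal.ofReal_add (by positivity) (by positivity)]
        congr 1
        field

variable {Ω : Type*} [MeasurableSpace Ω] {μ : Measure Ω}

lemma lintegral_lintegral_minAbsSq_div_mul_rpow_le [SFinite μ] (hp1 : 1 < p) (hp2 : p < 2)
    {Y : Ω → ℝ} (hY : Measurable Y) :
    ∫⁻ t in Set.Ioi 0, (∫⁻ ω, ENNReal.ofReal (minAbsSq (Y ω / t)) ∂μ) *
        ENNReal.ofReal (t ^ (p - 1)) ≤
      ∫⁻ ω, ENNReal.ofReal (|Y ω| ^ p / ((p - 1) * (2 - p))) ∂μ := by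
  calc ∫⁻ t in Set.Ioi 0, (∫⁻ ω, ENNReal.ofReal (minAbsSq (Y ω / t)) ∂μ) *
        ENNReal.ofReal (t ^ (p - 1))
      = ∫⁻ t in Set.Ioi 0, ∫⁻ ω, ENNReal.ofReal (minAbsSq (Y ω / t)) *
          ENNReal.ofReal (t ^ (p - 1)) ∂μ := by
        simp only [lintegral_mul_const' _ _ ENNReal.ofReal_ne_top]
    _ = ∫⁻ ω, (∫⁻ t in Set.Ioi 0, ENNReal.ofReal (minAbsSq (Y ω / t)) *
          ENNReal.ofReal (t ^ (p - 1))) ∂μ :=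
        lintegral_lintegral_swap (Measurable.aemeasurable (by fun_prop))
    _ ≤ ∫⁻ ω, ENNReal.ofReal (|Y ω| ^ p / ((p - 1) * (2 - p))) ∂μ :=
        lintegral_mono fun ω ↦ lintegral_minAbsSq_div_mul_rpow_le hp1 hp2 (Y ω)

lemma lintegral_abs_rpow_le_of_measure_lt_abs_le [SFinite μ] (hp1 : 1 < p) (hp2 : p < 2)
    {ι : Type*} {s : Finset ι} {Y : ι → Ω → ℝ} (hY : ∀ k ∈ s, Measurable (Y k)) {S : Ω → ℝ}
    (hS : AEMeasurable S μ) {A : ENNReal}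
    (htail : ∀ t, 0 < t →
      μ {ω | t < |S ω|} ≤ A * ∑ k ∈ s, ∫⁻ ω, ENNReal.ofReal (minAbsSq (Y k ω / t)) ∂μ) :
    ∫⁻ ω, ENNReal.ofReal (|S ω| ^ p) ∂μ ≤
      ENNReal.ofReal p * (A * ∑ k ∈ s,
        ∫⁻ ω, ENNReal.ofReal (|Y k ω| ^ p / ((p - 1) * (2 - p))) ∂μ) := by
  have hmeas (k : ι) (hk : k ∈ s) : Measurable fun t : ℝ ↦
      (∫⁻ ω, ENNReal.ofReal (minAbsSq (Y k ω / t)) ∂μ) * ENNReal.ofReal (t ^ (p - 1)) := by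
    have := hY k hk
    fun_prop
  rw [lintegral_rpow_eq_lintegral_meas_lt_mul μ (.of_forall fun ω ↦ abs_nonneg (S ω))
    (by fun_prop) (by linarith)]
  gcongr
  calc ∫⁻ t in Set.Ioi 0, μ {ω | t < |S ω|} * ENNReal.ofReal (t ^ (p - 1))
      ≤ ∫⁻ t in Set.Ioi 0, A * ∑ k ∈ s, (∫⁻ ω, ENNReal.ofReal (minAbsSq (Y k ω / t)) ∂μ) *
          ENNReal.ofReal (t ^ (p - 1)) := by
        refine setLIntegral_mono' measurableSet_Ioi fun t ht ↦ ?_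
        rw [← sum_mul, ← mul_assoc]
        gcongr
        exact htail t ht
    _ = A * ∑ k ∈ s, ∫⁻ t in Set.Ioi 0, (∫⁻ ω, ENNReal.ofReal (minAbsSq (Y k ω / t)) ∂μ) *
          ENNReal.ofReal (t ^ (p - 1)) := by
        rw [lintegral_const_mul _ (Finset.measurable_fun_sum s hmeas), lintegral_finsetSum _ hmeas]
    _ ≤ A * ∑ k ∈ s, ∫⁻ ω, ENNReal.ofReal (|Y k ω| ^ p / ((p - 1) * (2 - p))) ∂μ := by
        gcongr with k hk
        exact lintegral_lintegral_minAbsSq_div_mul_rpow_le hp1 hp2 (hY k hk)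

lemma sum_lintegral_ofReal_eq {ι : Type*} {s : Finset ι} {f : ι → Ω → ℝ}
    (hint : ∀ k ∈ s, Integrable (f k) μ) (hf : ∀ k ω, 0 ≤ f k ω) :
    ∑ k ∈ s, ∫⁻ ω, ENNReal.ofReal (f k ω) ∂μ = ENNReal.ofReal (∑ k ∈ s, ∫ ω, f k ω ∂μ) := by
  rw [ENNReal.ofReal_sum_of_nonneg fun k _ ↦ integral_nonneg (hf k)]
  exact sum_congr rfl fun k hk ↦
    (ofReal_integral_eq_lintegral_ofReal (hint k hk) (.of_forall (hf k))).symm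

lemma integrable_abs_rpow_of_memLp {Y : Ω → ℝ} (hp : 0 < p) (hY : MemLp Y (ENNReal.ofReal p) μ) :
    Integrable (fun ω ↦ |Y ω| ^ p) μ := by
  simpa only [ENNReal.toReal_ofReal hp.le, Real.norm_eq_abs] using
    hY.integrable_norm_rpow (by simpa using hp) ENNReal.ofReal_ne_top

lemma integral_abs_rpow_le_of_measureReal_lt_abs_le [IsProbabilityMeasure μ] (hp1 : 1 < p)
    (hp2 : p < 2) {ι : Type*} {s : Finset ι} {Y : ι → Ω → ℝ} (hY : ∀ k ∈ s, Measurable (Y k))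
    (hYp : ∀ k ∈ s, MemLp (Y k) (ENNReal.ofReal p) μ) {S : Ω → ℝ} (hS : AEMeasurable S μ)
    {A : ℝ} (hA : 0 ≤ A)
    (htail : ∀ t, 0 < t →
      μ.real {ω | t < |S ω|} ≤ A * ∑ k ∈ s, ∫ ω, minAbsSq (Y k ω / t) ∂μ) :
    ∫ ω, |S ω| ^ p ∂μ ≤ p * A / ((p - 1) * (2 - p)) * ∑ k ∈ s, ∫ ω, |Y k ω| ^ p ∂μ := by
  have hp : 0 < p := by linarith
  have : 0 < p - 1 := sub_pos.2 hp1
  have : 0 < 2 - p := sub_pos.2 hp2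
  have htail' (t : ℝ) (ht : 0 < t) : μ {ω | t < |S ω|} ≤
      ENNReal.ofReal A * ∑ k ∈ s, ∫⁻ ω, ENNReal.ofReal (minAbsSq (Y k ω / t)) ∂μ := by
    have hint (k : ι) (hk : k ∈ s) : Integrable (fun ω ↦ minAbsSq (Y k ω / t)) μ :=
      integrable_minAbsSq_div (hY k hk)
        ((hYp k hk).integrable (ENNReal.one_le_ofReal.2 hp1.le)) t
    rw [sum_lintegral_ofReal_eq hint fun _ _ ↦ minAbsSq_nonneg _, ← ENNReal.ofReal_mul hA,
      ← ofReal_measureReal]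
    exact ENNReal.ofReal_le_ofReal (htail t ht)
  have hmoment := lintegral_abs_rpow_le_of_measure_lt_abs_le hp1 hp2 hY hS htail'
  rw [sum_lintegral_ofReal_eq
      (fun k hk ↦ (integrable_abs_rpow_of_memLp hp (hYp k hk)).div_const _)
      fun _ _ ↦ by positivity,
    ← ENNReal.ofReal_mul hA, ← ENNReal.ofReal_mul hp.le] at hmoment
  have hle : ∫ ω, |S ω| ^ p ∂μ ≤ p * (A * ∑ k ∈ s, ∫ ω, |Y k ω| ^ p / ((p - 1) * (2 - p)) ∂μ) := by
    rw [integral_eq_lintegral_of_nonneg_ae (.of_forall fun ω ↦ by positivity)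
      (hS.abs.pow_const p).aestronglyMeasurable]
    exact ENNReal.toReal_le_of_le_ofReal (by positivity) hmoment
  refine hle.trans_eq ?_
  simp only [integral_div, ← sum_div]
  ring

end LayerCake

theorem integral_abs_sum_sub_rpow_le_of_phiDependentLE {Ω : Type*} [MeasurableSpace Ω]
    {μ : Measure Ω} [IsProbabilityMeasure μ] {p : ℝ} (hp1 : 1 < p) (hp2 : p < 2) {s : Finset ℕ}
    {Y : ℕ → Ω → ℝ} (hY : ∀ k ∈ s, Measurable (Y k))
    (hYp : ∀ k ∈ s, MemLp (Y k) (ENNReal.ofReal p) μ) {ε : ℕ → ℝ} (hε : Summable fun m ↦ √(ε m))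
    (hdep : ∀ i ∈ s, ∀ m, i + (m + 1) ∈ s → PhiDependentLE μ (Y i) (Y (i + (m + 1))) (ε m)) :
    ∫ ω, |∑ k ∈ s, (Y k ω - μ[Y k])| ^ p ∂μ ≤
      p * (8 * (1 + 2 * ∑' m, √(ε m))) / ((p - 1) * (2 - p)) * ∑ k ∈ s, ∫ ω, |Y k ω| ^ p ∂μ :=
  integral_abs_rpow_le_of_measureReal_lt_abs_le hp1 hp2 hY hYp
    (Finset.measurable_fun_sum s fun k hk ↦ (hY k hk).sub_const _).aemeasurable
    (by have : 0 ≤ ∑' m, √(ε m) := tsum_nonneg fun m ↦ Real.sqrt_nonneg _; positivity)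
    fun _ ht ↦ measureReal_lt_abs_sum_sub_le hY
      (fun k hk ↦ (hYp k hk).integrable (ENNReal.one_le_ofReal.2 hp1.le)) hε hdep ht

lemma summable_sqrt_of_le_mul_rpow {a : ℕ → ℝ} {C r : ℝ} (hr : 2 < r)
    (ha : ∀ m, 1 ≤ m → a m ≤ C * ((m : ℝ) + 1) ^ (-r)) : Summable fun m ↦ √(a (m + 1)) := by
  have hpow (m : ℕ) : √(((m : ℝ) + 2) ^ (-r)) = 1 / |(m : ℝ) + 2| ^ (r / 2) := by
    have : (0 : ℝ) < m + 2 := by positivity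
    rw [abs_of_pos this, Real.sqrt_eq_rpow, ← Real.rpow_mul this.le, one_div (_ ^ _),
      ← Real.rpow_neg this.le, mul_one_div, neg_div]
  have hsum : Summable fun m : ℕ ↦ √C * √(((m : ℝ) + 2) ^ (-r)) := by
    simp only [hpow]
    exact ((Real.summable_one_div_nat_add_rpow 2 (r / 2)).2 (by linarith)).mul_left _
  refine hsum.of_nonneg_of_le (fun m ↦ Real.sqrt_nonneg _) fun m ↦ ?_
  have hm := ha (m + 1) m.succ_pos
  rw [Nat.cast_add, Nat.cast_one, add_assoc, one_add_one_eq_two] at hm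
  rw [← Real.sqrt_mul' _ (by positivity)]
  exact Real.sqrt_le_sqrt hm

theorem integral_abs_sum_tailPart_rpow_le {Ω : Type*} [MeasurableSpace Ω] (μ : Measure Ω)
    [IsProbabilityMeasure μ] (X : ℕ → Ω → ℝ) (hmeas : ∀ k, 1 ≤ k → Measurable (X k))
    (hmix : Summable fun m ↦ √(phiCoef μ X (m + 1))) (p : ℝ) (hp1 : 1 < p) (hp2 : p < 2)
    (hint : ∀ k, 1 ≤ k → Integrable (fun ω ↦ |X k ω| ^ p) μ) (ν : ℝ)
    (hν : ∀ k, 1 ≤ k → ∫ ω, |X k ω| ^ p ∂μ ≤ ν) (n : ℕ) (b : ℝ) :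
    ∫ ω, |∑ k ∈ Icc 1 n, tailPart μ X b k ω| ^ p ∂μ ≤
      8 * p * (1 + 2 * phiSum μ X) / ((p - 1) * (2 - p)) * ν * n := by
  let g (x : ℝ) : ℝ := if b < |x| then x else 0
  have hg : Measurable g := Measurable.ite (measurableSet_lt measurable_const measurable_abs)
    measurable_id measurable_const
  have hg_le (x : ℝ) : |g x| ≤ |x| := by
    simp only [g]
    split_ifs <;> simp
  have hp : 0 < p := by linarith
  have hphi : 0 ≤ phiSum μ X := tsum_nonneg fun m ↦ Real.sqrt_nonneg _
  have hLp (k : ℕ) (hk : k ∈ Icc 1 n) : MemLp (g ∘ X k) (ENNReal.ofReal p) μ := by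
    have hXk := hmeas k (mem_Icc.1 hk).1
    refine .of_le (g := X k) ?_ (hg.comp hXk).aestronglyMeasurable (.of_forall fun ω ↦ hg_le _)
    rw [← integrable_norm_rpow_iff hXk.aestronglyMeasurable (by simpa using hp)
      ENNReal.ofReal_ne_top, ENNReal.toReal_ofReal hp.le]
    exact hint k (mem_Icc.1 hk).1
  have hmoment (k : ℕ) (hk : k ∈ Icc 1 n) : ∫ ω, |(g ∘ X k) ω| ^ p ∂μ ≤ ν :=
    (integral_mono (integrable_abs_rpow_of_memLp hp (hLp k hk)) (hint k (mem_Icc.1 hk).1)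
      fun ω ↦ Real.rpow_le_rpow (abs_nonneg _) (hg_le _) hp.le).trans (hν k (mem_Icc.1 hk).1)
  calc ∫ ω, |∑ k ∈ Icc 1 n, tailPart μ X b k ω| ^ p ∂μ
      ≤ p * (8 * (1 + 2 * phiSum μ X)) / ((p - 1) * (2 - p)) *
          ∑ k ∈ Icc 1 n, ∫ ω, |(g ∘ X k) ω| ^ p ∂μ :=
        integral_abs_sum_sub_rpow_le_of_phiDependentLE hp1 hp2
          (fun k hk ↦ hg.comp (hmeas k (mem_Icc.1 hk).1)) hLp hmix
          fun i hi m _ ↦ (phiDependentLE_phiCoef X (mem_Icc.1 hi).1 (m + 1)).comp hg hg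
    _ ≤ p * (8 * (1 + 2 * phiSum μ X)) / ((p - 1) * (2 - p)) * (n * ν) := by
        have : 0 < p - 1 := sub_pos.2 hp1
        have : 0 < 2 - p := sub_pos.2 hp2
        gcongr
        simpa using sum_le_card_nsmul _ _ ν hmoment
    _ = 8 * p * (1 + 2 * phiSum μ X) / ((p - 1) * (2 - p)) * ν * n := by ring

theorem sample_mean_tail_moment_bound_general {Ω : Type*} [MeasurableSpace Ω] (μ : Measure Ω)
    [IsProbabilityMeasure μ] (X : ℕ → Ω → ℝ) (hmeas : ∀ k, 1 ≤ k → Measurable (X k))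
    (hmix : Summable fun m ↦ √(phiCoef μ X (m + 1))) (α ν : ℝ) (hα0 : 0 < α) (hα1 : α < 1)
    (hint : ∀ k, 1 ≤ k → Integrable (fun ω ↦ |X k ω| ^ (1 + α)) μ)
    (hν : ∀ k, 1 ≤ k → ∫ ω, |X k ω| ^ (1 + α) ∂μ ≤ ν) :
    ∃ cα : ℝ, 0 < cα ∧ ∀ (n : ℕ) (b : ℝ),
      ∫ ω, |∑ k ∈ Icc 1 n, tailPart μ X b k ω| ^ (1 + α) ∂μ ≤ 2 ^ (1 + α) * cα * ν * n := by
  set K := 8 * (1 + α) * (1 + 2 * phiSum μ X) / ((1 + α - 1) * (2 - (1 + α))) with hK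
  have hK_pos : 0 < K := by
    have : 0 ≤ phiSum μ X := tsum_nonneg fun m ↦ Real.sqrt_nonneg _
    have : 0 < 2 - (1 + α) := by linarith
    rw [hK, add_sub_cancel_left]
    positivity
  refine ⟨K / 2 ^ (1 + α), by positivity, fun n b ↦ ?_⟩
  rw [mul_div_cancel₀ K (by positivity)]
  exact integral_abs_sum_tailPart_rpow_le μ X hmeas hmix (1 + α) (by linarith) (by linarith)
    hint ν hν n b

/-- Lemma 1 of the paper: under the φ-mixing condition (1) with rate `r > 2`
and the moment condition (2) with exponent `α ∈ (0,1)`, there is a constant `cα > 0`,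
independent of `n` and `b`, such that `E|∑_{k=1}^n Z_k(b)|^{1+α} ≤ 2^{1+α} cα να n`
for all `n ≥ 1` and `b > 0`. -/
theorem sample_mean_tail_moment_bound
    {Ω : Type*} [MeasurableSpace Ω] (μ : Measure Ω) [IsProbabilityMeasure μ]
    (X : ℕ → Ω → ℝ) (hmeas : ∀ n, Measurable (X n))
    (r C : ℝ) (hr : 2 < r) (hC : 0 < C)
    (hmix : ∀ m : ℕ, 1 ≤ m → phiCoef μ X m ≤ C * ((m : ℝ) + 1) ^ (-r))
    (α να : ℝ) (hα0 : 0 < α) (hα1 : α < 1)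
    (hint : ∀ n : ℕ, 1 ≤ n → Integrable (fun ω => |X n ω| ^ (1 + α)) μ)
    (hbdd : BddAbove (Set.range fun n : ℕ => ∫ ω, |X (n + 1) ω| ^ (1 + α) ∂μ))
    (hνα : να = ⨆ n : ℕ, ∫ ω, |X (n + 1) ω| ^ (1 + α) ∂μ)
    (hνpos : 0 < να) :
    ∃ cα : ℝ, 0 < cα ∧ ∀ n : ℕ, 1 ≤ n → ∀ b : ℝ, 0 < b →
      ∫ ω, |∑ k ∈ Finset.Icc 1 n, tailPart μ X b k ω| ^ (1 + α) ∂μ ≤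
        2 ^ (1 + α) * cα * να * n := by
  obtain ⟨c, hc, hbound⟩ := sample_mean_tail_moment_bound_general μ X (fun k _ ↦ hmeas k)
    (summable_sqrt_of_le_mul_rpow hr hmix) α να hα0 hα1 hint
    fun | m + 1, _ => hνα ▸ le_ciSup hbdd m
  exact ⟨c, hc, fun n _ b _ ↦ hbound n b⟩
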